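/- For t > s and α > 1/2, with λ: ℝ → (0,∞) bounded measurable, the covariance integral (1/Γ(α)²) ∫_{−∞}^{s} e^{−λ(t)(t−u) − λ(s)(s−u)} (t−u)^{α−1}(s−u)^{α−1} du equals (e^{−λ₋(t,s)(t−s)} (t−s)^{α−1/2}) / (√π Γ(α) (2λ₊(t,s))^{α−1/2}) · K_{α−1/2}(λ₊(t,s)(t−s)), where λ₊(t,s) = (λ(t)+λ(s))/2 and λ₋(t,s) = (λ(t)−λ(s))/2. -/

import Mathlib

open Real MeasureTheory

/-- Modified Bessel function of the second kind, via its integral representation. -/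
noncomputable def besselK (ν x : ℝ) : ℝ :=
  ∫ t in Set.Ioi (0 : ℝ), Real.exp (-x * Real.cosh t) * Real.cosh (ν * t)

/-!
The integrand `q ^ (α - 1) * exp (-(x / 2 * (1 + q) * exp τ + x / 2 * exp (-τ)) + μ * τ)` is a
Gamma integrand in `q` and, up to a translation, a Bessel integrand in `τ`. Fubini's theorem gives
Sonine's formula for `∫ q ^ (α - 1) * (1 + q) ^ (-μ / 2) * K_μ (x * √(1 + q))`. For `μ = 1 / 2` the
Bessel function is elementary, and `q = w ^ 2 - 1` turns Sonine's formula into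
`∫_{w > 1} exp (-x * w) * (w ^ 2 - 1) ^ (α - 1)
  = Γ(α) / √π * (2 / x) ^ (α - 1 / 2) * K_{α - 1 / 2}(x)`.
The covariance integral has this form after an affine change of variable sending `s` and `t` to
`1` and `-1`.
-/

section Substitution

variable {E : Type*} [NormedAddCommGroup E] [NormedSpace ℝ E]

lemma integral_comp_add_right_Ioi (g : ℝ → E) (a c : ℝ) :
    ∫ x in Set.Ioi a, g (x + c) = ∫ x in Set.Ioi (a + c), g x := by
  have h := (measurePreserving_add_right volume c).setIntegral_preimage_emb
    (measurableEmbedding_addRight c) g (Set.Ioi (a + c))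
  rwa [Set.preimage_add_const_Ioi, add_sub_cancel_right] at h

lemma integral_Iic_sub_mul (g : ℝ → E) (m a : ℝ) {r : ℝ} (hr : 0 < r) :
    ∫ u in Set.Iic (m - r * a), g u = r • ∫ w in Set.Ioi a, g (m - r * w) := by
  calc ∫ u in Set.Iic (m - r * a), g u
      = ∫ y in Set.Ioi (r * a + -m), g (-y) := by
        rw [integral_comp_neg_Ioi, neg_add, neg_neg, neg_add_eq_sub]
    _ = ∫ z in Set.Ioi (r * a), g (m - z) := by
        rw [← integral_comp_add_right_Ioi]
        simp only [neg_add, neg_neg, neg_add_eq_sub]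
    _ = r • ∫ w in Set.Ioi a, g (m - r * w) :=
        (integral_comp_mul_left_Ioi' (fun z => g (m - z)) a hr).symm

lemma integral_Ioi_one_smul_comp_sq_sub_one (g : ℝ → E) :
    ∫ w in Set.Ioi (1 : ℝ), w • g (w ^ 2 - 1) = (1 / 2 : ℝ) • ∫ q in Set.Ioi (0 : ℝ), g q := by
  have hsq := integral_comp_rpow_Ioi_of_pos' (g := fun y => g (y - 1)) two_pos zero_le_one
  have hshift := integral_comp_add_right_Ioi g 1 (-1)
  simp only [Real.one_rpow, show (2 : ℝ) - 1 = 1 by norm_num, Real.rpow_one, Real.rpow_two,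
    mul_smul, integral_smul] at hsq
  simp only [← sub_eq_add_neg, sub_self] at hshift
  rw [← hshift, ← hsq, smul_smul, one_div, inv_mul_cancel₀ two_ne_zero, one_smul]

end Substitution

lemma cosh_two_mul_eq_one_add (x : ℝ) : cosh (2 * x) = 1 + 2 * sinh x ^ 2 := by
  rw [Real.cosh_two_mul, Real.cosh_sq]
  ring

lemma sq_div_two_le_cosh (x : ℝ) : x ^ 2 / 2 ≤ cosh x := by
  have hsinh : (|x| / 2) ^ 2 ≤ sinh (|x| / 2) ^ 2 := by
    gcongr
    exact Real.self_le_sinh_iff.2 (by positivity)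
  have hcosh := cosh_two_mul_eq_one_add (|x| / 2)
  rw [mul_div_cancel₀ _ two_ne_zero, Real.cosh_abs] at hcosh
  rw [div_pow, sq_abs] at hsinh
  linarith

lemma integrable_exp_neg_mul_cosh_add_mul {x : ℝ} (hx : 0 < x) (ν : ℝ) :
    Integrable fun τ : ℝ => exp (-x * cosh τ + ν * τ) := by
  have hgauss : Integrable fun τ : ℝ => exp (ν ^ 2 / (2 * x)) * exp (-(x / 2) * (τ - ν / x) ^ 2) :=
    ((integrable_exp_neg_mul_sq (half_pos hx)).comp_sub_right (ν / x)).const_mul _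
  refine hgauss.mono' (by fun_prop) (.of_forall fun τ => ?_)
  rw [Real.norm_of_nonneg (exp_pos _).le, ← Real.exp_add, Real.exp_le_exp]
  calc -x * cosh τ + ν * τ ≤ -x * (τ ^ 2 / 2) + ν * τ := by
        have := mul_le_mul_of_nonneg_left (sq_div_two_le_cosh τ) hx.le
        linarith
    _ = ν ^ 2 / (2 * x) + -(x / 2) * (τ - ν / x) ^ 2 := by
        field_simp
        ring

lemma besselK_neg (ν x : ℝ) : besselK (-ν) x = besselK ν x := by
  simp only [besselK, neg_mul, Real.cosh_neg]

lemma integral_exp_neg_mul_cosh_add_mul {x : ℝ} (hx : 0 < x) (ν : ℝ) :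
    ∫ τ : ℝ, exp (-x * cosh τ + ν * τ) = 2 * besselK ν x := by
  have hreflect : ∫ τ : ℝ, exp (-x * cosh τ + -ν * τ) = ∫ τ : ℝ, exp (-x * cosh τ + ν * τ) := by
    rw [← integral_neg_eq_self]
    simp only [Real.cosh_neg, neg_mul_neg]
  have heven : ∀ τ : ℝ, exp (-x * cosh |τ|) * cosh (ν * |τ|)
      = (exp (-x * cosh τ + ν * τ) + exp (-x * cosh τ + -ν * τ)) / 2 := by
    intro τ
    rw [← Real.cosh_abs (ν * |τ|), abs_mul, abs_abs, ← abs_mul, Real.cosh_abs, Real.cosh_abs,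
      Real.exp_add, Real.exp_add, Real.cosh_eq (ν * τ), neg_mul ν τ]
    ring
  rw [besselK, ← integral_comp_abs (f := fun τ => exp (-x * cosh τ) * cosh (ν * τ))]
  simp_rw [heven]
  rw [integral_div, integral_add (integrable_exp_neg_mul_cosh_add_mul hx ν)
    (integrable_exp_neg_mul_cosh_add_mul hx (-ν)), hreflect, add_self_div_two]

lemma integral_exp_neg_mul_exp_add_mul_exp_neg {a b : ℝ} (ha : 0 < a) (hb : 0 < b) (ν : ℝ) :
    ∫ τ : ℝ, exp (-(a * exp τ + b * exp (-τ)) + ν * τ)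
      = 2 * ((b / a) ^ (ν / 2) * besselK ν (2 * √(a * b))) := by
  -- Translating `τ` by `log √(b / a)` makes both exponentials have the coefficient `√(a * b)`.
  have hpos : 0 < √(b / a) := by positivity
  have hab : √(a * b) = a * √(b / a) := by
    rw [← Real.sqrt_sq ha.le, ← Real.sqrt_mul (by positivity), Real.sqrt_sq ha.le]
    congr 1
    field_simp
  have hba : b * (√(b / a))⁻¹ = √(a * b) := by
    rw [hab, ← div_eq_mul_inv, div_eq_iff hpos.ne', mul_assoc, Real.mul_self_sqrt (by positivity)]
    field_simp
  have hweight : exp (ν * log √(b / a)) = (b / a) ^ (ν / 2) := by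
    rw [Real.log_sqrt (by positivity), Real.rpow_def_of_pos (by positivity)]
    ring_nf
  have hshift : ∀ τ : ℝ, exp (-(a * exp (τ + log √(b / a)) + b * exp (-(τ + log √(b / a))))
        + ν * (τ + log √(b / a)))
      = (b / a) ^ (ν / 2) * exp (-(2 * √(a * b)) * cosh τ + ν * τ) := by
    intro τ
    rw [← hweight, ← Real.exp_add, neg_add τ, Real.exp_add τ, Real.exp_add (-τ),
      Real.exp_neg (log _), Real.exp_log hpos, Real.cosh_eq]
    congr 1
    linear_combination (exp τ) * hab - exp (-τ) * hba
  rw [← integral_add_right_eq_self _ (log √(b / a))]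
  simp_rw [hshift]
  rw [integral_const_mul, integral_exp_neg_mul_cosh_add_mul (by positivity)]
  ring

-- For `x ≤ 0` both sides take the junk value `0`.
lemma besselK_one_half (x : ℝ) :
    besselK (1 / 2) x = √(π / (2 * x)) * exp (-x) := by
  have himage : sinh '' Set.Ioi 0 = Set.Ioi 0 := by
    simpa only [Real.sinhOrderIso_apply, Real.sinh_zero] using Real.sinhOrderIso.image_Ioi 0
  have hsinh := integral_image_eq_integral_deriv_smul_of_monotoneOn measurableSet_Ioi
    (fun θ _ => (Real.hasDerivAt_sinh θ).hasDerivWithinAt)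
    (Real.sinh_strictMono.monotone.monotoneOn (Set.Ioi 0))
    (fun w => exp (-(2 * x) * w ^ 2))
  rw [himage, integral_gaussian_Ioi] at hsinh
  have hdouble := integral_comp_mul_left_Ioi'
    (fun τ => exp (-x * cosh τ) * cosh (1 / 2 * τ)) 0 (two_pos (α := ℝ))
  rw [mul_zero] at hdouble
  have hfactor : ∀ θ : ℝ, exp (-x * cosh (2 * θ)) * cosh (1 / 2 * (2 * θ))
      = exp (-x) * (cosh θ • exp (-(2 * x) * sinh θ ^ 2)) := by
    intro θ
    rw [show 1 / 2 * (2 * θ) = θ by ring, cosh_two_mul_eq_one_add, smul_eq_mul, mul_left_comm,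
      ← Real.exp_add, mul_comm]
    ring_nf
  rw [besselK, ← hdouble]
  simp_rw [hfactor]
  rw [integral_const_mul, ← hsinh, smul_eq_mul]
  ring

/-- The function of `(τ, q)` whose two iterated integrals give the two sides of Sonine's formula
`integral_rpow_mul_besselK_sqrt`: integrating over `τ` produces `besselK μ (x * √(1 + q))`, and
integrating over `q` produces the integrand of `besselK (μ - α) x`. -/
noncomputable def sonineKernel (α μ x τ q : ℝ) : ℝ :=
  q ^ (α - 1) * exp (-(x / 2 * (1 + q) * exp τ + x / 2 * exp (-τ)) + μ * τ)

section Sonine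

variable {α x : ℝ}

lemma sonineKernel_eq (α μ x τ q : ℝ) :
    sonineKernel α μ x τ q
      = exp (-x * cosh τ + μ * τ) * (q ^ (α - 1) * exp (-(x / 2 * exp τ * q))) := by
  rw [sonineKernel, mul_left_comm, ← Real.exp_add, Real.cosh_eq]
  ring_nf

lemma sonineKernel_nonneg (α μ x τ : ℝ) {q : ℝ} (hq : 0 ≤ q) : 0 ≤ sonineKernel α μ x τ q := by
  rw [sonineKernel]
  positivity

lemma integral_sonineKernel_left (hx : 0 < x) {q : ℝ} (hq : 0 ≤ q) (α μ : ℝ) :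
    ∫ τ, sonineKernel α μ x τ q
      = 2 * (q ^ (α - 1) * ((1 + q) ^ (-μ / 2) * besselK μ (x * √(1 + q)))) := by
  have hratio : x / 2 / (x / 2 * (1 + q)) = (1 + q)⁻¹ := by field_simp
  have hsqrt : 2 * √(x / 2 * (1 + q) * (x / 2)) = x * √(1 + q) := by
    rw [show x / 2 * (1 + q) * (x / 2) = (x / 2) ^ 2 * (1 + q) by ring,
      Real.sqrt_mul (sq_nonneg _), Real.sqrt_sq (by positivity)]
    ring
  simp only [sonineKernel]
  rw [integral_const_mul,
    integral_exp_neg_mul_exp_add_mul_exp_neg (by positivity) (by positivity), hratio, hsqrt,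
    Real.inv_rpow (by positivity), ← Real.rpow_neg (by positivity), neg_div]
  ring

lemma integral_sonineKernel_right (hα : 0 < α) (hx : 0 < x) (μ τ : ℝ) :
    ∫ q in Set.Ioi (0 : ℝ), sonineKernel α μ x τ q
      = Gamma α * (2 / x) ^ α * exp (-x * cosh τ + (μ - α) * τ) := by
  simp_rw [sonineKernel_eq]
  rw [integral_const_mul, Real.integral_rpow_mul_exp_neg_mul_Ioi hα (by positivity),
    show 1 / (x / 2 * exp τ) = 2 / x * exp (-τ) by rw [Real.exp_neg]; field_simp,
    Real.mul_rpow (by positivity) (exp_pos _).le, ← Real.exp_mul,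
    show -x * cosh τ + (μ - α) * τ = -x * cosh τ + μ * τ + -τ * α by ring, Real.exp_add _ (-τ * α)]
  ring

lemma integrableOn_sonineKernel (hα : 0 < α) (hx : 0 < x) (μ τ : ℝ) :
    IntegrableOn (sonineKernel α μ x τ) (Set.Ioi 0) := by
  have h := integrableOn_rpow_mul_exp_neg_mul_rpow (p := 1) (s := α - 1) (b := x / 2 * exp τ)
    (by linarith) one_pos (by positivity)
  refine IntegrableOn.congr_fun (h.const_mul (exp (-x * cosh τ + μ * τ))) (fun q _ => ?_)
    measurableSet_Ioi
  simp only [sonineKernel_eq, Real.rpow_one, neg_mul]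

lemma integrable_uncurry_sonineKernel (hα : 0 < α) (hx : 0 < x) (μ : ℝ) :
    Integrable (Function.uncurry (sonineKernel α μ x))
      (volume.prod (volume.restrict (Set.Ioi 0))) := by
  have hmeas : Measurable (Function.uncurry (sonineKernel α μ x)) := by
    unfold Function.uncurry sonineKernel
    fun_prop
  have hnorm : ∀ τ, ∫ q in Set.Ioi (0 : ℝ), ‖sonineKernel α μ x τ q‖
      = Gamma α * (2 / x) ^ α * exp (-x * cosh τ + (μ - α) * τ) := by
    intro τ
    rw [← integral_sonineKernel_right hα hx]
    exact setIntegral_congr_fun measurableSet_Ioi fun q hq =>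
      Real.norm_of_nonneg (sonineKernel_nonneg α μ x τ (le_of_lt hq))
  rw [integrable_prod_iff hmeas.aestronglyMeasurable]
  refine ⟨.of_forall fun τ => integrableOn_sonineKernel hα hx μ τ, ?_⟩
  simp only [Function.uncurry_apply_pair, hnorm]
  exact (integrable_exp_neg_mul_cosh_add_mul hx (μ - α)).const_mul _

lemma integral_rpow_mul_besselK_sqrt (hα : 0 < α) (hx : 0 < x) (μ : ℝ) :
    ∫ q in Set.Ioi (0 : ℝ), q ^ (α - 1) * ((1 + q) ^ (-μ / 2) * besselK μ (x * √(1 + q)))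
      = Gamma α * (2 / x) ^ α * besselK (μ - α) x := by
  have hswap := integral_integral_swap (integrable_uncurry_sonineKernel hα hx μ)
  simp_rw [integral_sonineKernel_right hα hx] at hswap
  rw [setIntegral_congr_fun measurableSet_Ioi
      fun q hq => integral_sonineKernel_left hx (le_of_lt hq) α μ,
    integral_const_mul, integral_const_mul, integral_exp_neg_mul_cosh_add_mul hx] at hswap
  linear_combination -hswap / 2

lemma mul_rpow_mul_besselK_one_half_sqrt_sq (hx : 0 < x) {w : ℝ} (hw : 0 < w) :
    w * ((w ^ 2) ^ (-(1 / 2 : ℝ) / 2) * besselK (1 / 2) (x * √(w ^ 2)))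
      = √(π / (2 * x)) * exp (-x * w) := by
  have hrpow : (w ^ 2) ^ (-(1 / 2 : ℝ) / 2) = (√w)⁻¹ := by
    rw [← Real.rpow_natCast, ← Real.rpow_mul hw.le, Real.sqrt_eq_rpow, ← Real.rpow_neg hw.le]
    norm_num
  have hsqrt : √(π / (2 * (x * w))) = √(π / (2 * x)) / √w := by
    rw [← Real.sqrt_div (by positivity), div_div, mul_assoc]
  rw [hrpow, Real.sqrt_sq hw.le, besselK_one_half, hsqrt, neg_mul]
  field_simp
  rw [Real.sq_sqrt hw.le]

lemma integral_exp_neg_mul_mul_sq_sub_one_rpow (hα : 0 < α) (hx : 0 < x) :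
    ∫ w in Set.Ioi (1 : ℝ), exp (-x * w) * (w ^ 2 - 1) ^ (α - 1)
      = Gamma α / √π * (2 / x) ^ (α - 1 / 2) * besselK (α - 1 / 2) x := by
  have hconst : (2 / x) ^ α / 2 = √(π / (2 * x)) * ((2 / x) ^ (α - 1 / 2) / √π) := by
    rw [Real.rpow_sub (by positivity), ← Real.sqrt_eq_rpow,
      show π / (2 * x) = π * (2 / x) / 2 ^ 2 by ring,
      Real.sqrt_div (by positivity), Real.sqrt_sq two_pos.le, Real.sqrt_mul pi_pos.le]
    field_simp
  have hne : √(π / (2 * x)) ≠ 0 := by positivity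
  refine mul_left_cancel₀ hne ?_
  calc √(π / (2 * x)) * ∫ w in Set.Ioi (1 : ℝ), exp (-x * w) * (w ^ 2 - 1) ^ (α - 1)
      = ∫ w in Set.Ioi (1 : ℝ), w • ((w ^ 2 - 1) ^ (α - 1) *
          ((1 + (w ^ 2 - 1)) ^ (-(1 / 2 : ℝ) / 2) *
            besselK (1 / 2) (x * √(1 + (w ^ 2 - 1))))) := by
        rw [← integral_const_mul]
        refine setIntegral_congr_fun measurableSet_Ioi fun w hw => ?_
        rw [add_sub_cancel, smul_eq_mul, mul_left_comm w,
          mul_rpow_mul_besselK_one_half_sqrt_sq hx (one_pos.trans hw)]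
        ring
    _ = 1 / 2 * (Gamma α * (2 / x) ^ α * besselK (1 / 2 - α) x) := by
        rw [integral_Ioi_one_smul_comp_sq_sub_one (fun q => q ^ (α - 1) *
          ((1 + q) ^ (-(1 / 2 : ℝ) / 2) * besselK (1 / 2) (x * √(1 + q)))),
          integral_rpow_mul_besselK_sqrt hα hx, smul_eq_mul]
    _ = √(π / (2 * x)) * (Gamma α / √π * (2 / x) ^ (α - 1 / 2) * besselK (α - 1 / 2) x) := by
        rw [← neg_sub α, besselK_neg]
        linear_combination Gamma α * besselK (α - 1 / 2) x * hconst

end Sonine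

lemma integral_exp_mul_rpow_mul_rpow (α a b : ℝ) {t s : ℝ} (hts : s < t) :
    ∫ u in Set.Iic s, exp (-a * (t - u) - b * (s - u)) * (t - u) ^ (α - 1) * (s - u) ^ (α - 1)
      = exp (-((a - b) / 2) * (t - s)) * ((t - s) / 2) ^ (2 * α - 1) *
        ∫ w in Set.Ioi (1 : ℝ), exp (-((a + b) / 2 * (t - s)) * w) * (w ^ 2 - 1) ^ (α - 1) := by
  set r := (t - s) / 2 with hr
  have hr0 : 0 < r := half_pos (sub_pos.2 hts)
  have hendpoint : (t + s) / 2 - r * 1 = s := by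
    rw [hr]
    ring
  have hpow : r * (r ^ (α - 1) * r ^ (α - 1)) = r ^ (2 * α - 1) := by
    rw [show 2 * α - 1 = 1 + ((α - 1) + (α - 1)) by ring, Real.rpow_add hr0, Real.rpow_add hr0,
      Real.rpow_one]
  have hsubst := integral_Iic_sub_mul (fun u => exp (-a * (t - u) - b * (s - u)) *
    (t - u) ^ (α - 1) * (s - u) ^ (α - 1)) ((t + s) / 2) 1 hr0
  rw [hendpoint, smul_eq_mul] at hsubst
  rw [hsubst, ← hpow, ← integral_const_mul, ← integral_const_mul]
  refine setIntegral_congr_fun measurableSet_Ioi fun w hw => ?_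
  have hw1 : 0 < w - 1 := sub_pos.2 hw
  have ht : t - ((t + s) / 2 - r * w) = r * (w + 1) := by
    rw [hr]
    ring
  have hs : s - ((t + s) / 2 - r * w) = r * (w - 1) := by
    rw [hr]
    ring
  have hexp : exp (-a * (r * (w + 1)) - b * (r * (w - 1)))
      = exp (-((a - b) / 2) * (t - s)) * exp (-((a + b) / 2 * (t - s)) * w) := by
    rw [← Real.exp_add, hr]
    ring_nf
  rw [ht, hs, hexp, Real.mul_rpow hr0.le (by linarith), Real.mul_rpow hr0.le hw1.le,
    show w ^ 2 - 1 = (w + 1) * (w - 1) by ring, Real.mul_rpow (by linarith) hw1.le]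
  ring

theorem stmt15_general {α : ℝ} (hα : 0 < α) {a b : ℝ} (hab : 0 < a + b) {t s : ℝ} (hts : s < t) :
    (1 / Gamma α ^ 2) *
        ∫ u in Set.Iic s, exp (-a * (t - u) - b * (s - u)) * (t - u) ^ (α - 1) * (s - u) ^ (α - 1)
      = exp (-((a - b) / 2) * (t - s)) * (t - s) ^ (α - 1 / 2)
          / (√π * Gamma α * (2 * ((a + b) / 2)) ^ (α - 1 / 2))
          * besselK (α - 1 / 2) ((a + b) / 2 * (t - s)) := by
  have hd : 0 < t - s := sub_pos.2 hts
  have hΓ : Gamma α ≠ 0 := (Real.Gamma_pos_of_pos hα).ne'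
  have hpow : ((t - s) / 2) ^ (2 * α - 1) * (2 / ((a + b) / 2 * (t - s))) ^ (α - 1 / 2)
      = (t - s) ^ (α - 1 / 2) / (2 * ((a + b) / 2)) ^ (α - 1 / 2) := by
    rw [show 2 * α - 1 = 2 * (α - 1 / 2) by ring, Real.rpow_mul (by positivity), Real.rpow_two,
      ← Real.mul_rpow (by positivity) (by positivity), ← Real.div_rpow hd.le (by positivity)]
    congr 1
    field_simp
  rw [integral_exp_mul_rpow_mul_rpow α a b hts,
    integral_exp_neg_mul_mul_sq_sub_one_rpow hα (by positivity)]
  calc _ = 1 / (√π * Gamma α) * exp (-((a - b) / 2) * (t - s)) *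
          (((t - s) / 2) ^ (2 * α - 1) * (2 / ((a + b) / 2 * (t - s))) ^ (α - 1 / 2)) *
          besselK (α - 1 / 2) ((a + b) / 2 * (t - s)) := by field_simp
    _ = _ := by
        rw [hpow]
        field_simp

theorem stmt15 (α : ℝ) (hα : 1/2 < α) (lam : ℝ → ℝ) (hpos : ∀ x, 0 < lam x)
    (hbdd : ∃ M, ∀ x, lam x ≤ M) (hmeas : Measurable lam)
    (t s : ℝ) (hts : s < t) :
    (1 / Real.Gamma α ^ 2) *
        ∫ u in Set.Iic s,
          Real.exp (-(lam t) * (t - u) - (lam s) * (s - u)) *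
            (t - u) ^ (α - 1) * (s - u) ^ (α - 1)
      = Real.exp (-((lam t - lam s)/2) * (t - s)) * (t - s) ^ (α - 1/2)
          / (Real.sqrt π * Real.Gamma α * (2 * ((lam t + lam s)/2)) ^ (α - 1/2))
          * besselK (α - 1/2) (((lam t + lam s)/2) * (t - s)) :=
  stmt15_general (by linarith) (add_pos (hpos t) (hpos s)) hts
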